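/- Let 1 ≤ i ≤ n, let e_i ∈ ℕ^n be the i-th standard unit vector, and denote by u(a_j), u(b), u(d_j) the tuples in ℕ^{2n−2} with a single 1 in the indicated coordinate and 0 elsewhere. Then the following tuples belong to S_D(e_i): (1) if i = 1: u(a_j) for all 1 ≤ j ≤ n−1, u(b), u(d_j) for all 2 ≤ j ≤ n−1, and u(a_{n−1}) + u(b); (2) if 2 ≤ i ≤ n−2: u(a_j) for all i ≤ j ≤ n−1, u(b), u(d_j) for all 2 ≤ j ≤ n−1, u(a_{n−1}) + u(b), u(a_j) + u(d_{j'}) for all i ≤ j ≤ n−1 and 2 ≤ j' ≤ i, and u(d_j) + u(d_{j'}) for all 2 ≤ j, j' ≤ i with j ≠ j'; (3) if i = n−1: u(a_{n−1}) and u(d_j) for all 2 ≤ j ≤ n−1; (4) if i = n: u(b) and u(d_j) for all 2 ≤ j ≤ n−1. (This is the paper's Lemma on the fundamental sets S_w(ω_i) in type D.) -/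

import Mathlib

open Finset
open scoped Pointwise

/-- The `i`-th standard unit vector (1-based coordinates, as a function `ℕ → ℕ`). -/
def unitVec (i : ℕ) : ℕ → ℕ := fun l => if l = i then 1 else 0

/-- The quantity `Q_d(m) = (m_1 + ⋯ + m_{d-1}) + 2(m_d + ⋯ + m_{n-2}) + m_{n-1} + m_n`
appearing in the type-`D` inequalities. -/
def QD (n : ℕ) (m : ℕ → ℕ) (d : ℕ) : ℕ :=
  (∑ l ∈ Icc 1 (d - 1), m l) + 2 * (∑ l ∈ Icc d (n - 2), m l) + m (n - 1) + m n

/-- The lattice-point set `S_D(m)` of the polytope `P_w(λ)` in type `D_n`, where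
`w = s_1 ⋯ s_{n-1} s_n s_{n-2} ⋯ s_1` and `λ = m_1 ω_1 + ⋯ + m_n ω_n`.
A point is a triple `(a, b, d)` where `a` is the 1-based tuple `a_1, …, a_{n-1}`,
`b ∈ ℕ` and `d` is the 1-based tuple `d_2, …, d_{n-1}` (all other coordinates vanish),
subject to the Dyck-path inequalities (D1)–(D4), the degree-path inequalities (D5)–(D6)
and the inequalities (D7) from paths with coefficients. -/
def SD (n : ℕ) (m : ℕ → ℕ) : Set ((ℕ → ℕ) × ℕ × (ℕ → ℕ)) :=
  {x | (∀ l, (l = 0 ∨ n - 1 < l) → x.1 l = 0) ∧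
    (∀ l, (l ≤ 1 ∨ n - 1 < l) → x.2.2 l = 0) ∧
    (∀ j, 1 ≤ j → j ≤ n - 1 →
      ∑ l ∈ Icc 1 j, x.1 l ≤ ∑ l ∈ Icc 1 j, m l) ∧
    ((∑ l ∈ Icc 1 (n - 2), x.1 l) + x.2.1 ≤ (∑ l ∈ Icc 1 (n - 2), m l) + m n) ∧
    ((∑ l ∈ Icc 1 (n - 1), x.1 l) + x.2.2 (n - 1) ≤ ∑ l ∈ Icc 1 n, m l) ∧
    ((∑ l ∈ Icc 1 (n - 2), x.1 l) + x.2.1 + x.2.2 (n - 1) ≤ ∑ l ∈ Icc 1 n, m l) ∧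
    (∀ d, 2 ≤ d → d ≤ n - 2 →
      (∑ l ∈ Icc 1 (n - 1), x.1 l) + ∑ l ∈ Icc d (n - 1), x.2.2 l ≤ QD n m d) ∧
    (∀ d, 2 ≤ d → d ≤ n - 2 →
      (∑ l ∈ Icc 1 (n - 2), x.1 l) + x.2.1 + ∑ l ∈ Icc d (n - 1), x.2.2 l ≤ QD n m d) ∧
    (∀ d k, 2 ≤ d → d ≤ n - 1 → d - 1 ≤ k → k ≤ n - 2 →
      2 * (∑ l ∈ Icc 1 k, x.1 l) + (∑ l ∈ Icc (k + 1) (n - 1), x.1 l) + x.2.1 +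
          ∑ l ∈ Icc d (n - 1), x.2.2 l ≤
        QD n m d + ∑ l ∈ Icc 1 k, m l)}

/-!
The key point is that every listed point has `b = 0` or `d = 0`, and that the inequalities (D7) are
redundant in both cases, for every `m`. Write `M_j = m_1 + ⋯ + m_j`. If `b = 0`, then (D7) is the
sum of (D1) for `k` and the inequality `A_{n-1} + d_d + ⋯ + d_{n-1} ≤ Q_d(m)` of (D3) or (D5),
where `A_j = a_1 + ⋯ + a_j`. If `d = 0`, then all inequalities follow from (D1) and (D2), because
`Q_d(m) = M_n + (m_d + ⋯ + m_{n-2})`, so that `Q_d(m) + M_{d-1} = M_{n-1} + (M_{n-2} + m_n)` is the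
sum of the bounds in (D1) for `n - 1` and in (D2).
-/

theorem sum_Icc_add_sum_Icc_succ {M : Type*} [AddCommMonoid M] (f : ℕ → M) {p k q : ℕ}
    (hpk : p ≤ k + 1) (hkq : k ≤ q) :
    ∑ l ∈ Icc p k, f l + ∑ l ∈ Icc (k + 1) q, f l = ∑ l ∈ Icc p q, f l := by
  simpa only [Ico_add_one_right_eq_Icc] using
    sum_Ico_consecutive f hpk (Nat.add_le_add_right hkq 1)

theorem sum_Icc_pred_add_sum_Icc {M : Type*} [AddCommMonoid M] (f : ℕ → M) {d q : ℕ}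
    (hd : 1 ≤ d) (hdq : d - 1 ≤ q) :
    ∑ l ∈ Icc 1 (d - 1), f l + ∑ l ∈ Icc d q, f l = ∑ l ∈ Icc 1 q, f l := by
  simpa only [Nat.sub_add_cancel hd] using
    sum_Icc_add_sum_Icc_succ f (Nat.le_add_left 1 (d - 1)) hdq

theorem sum_Icc_pred_add {M : Type*} [AddCommMonoid M] (f : ℕ → M) {n : ℕ} (hn : 1 ≤ n) :
    ∑ l ∈ Icc 1 (n - 1), f l + f n = ∑ l ∈ Icc 1 n, f l := by
  simpa only [Icc_self, sum_singleton] using sum_Icc_pred_add_sum_Icc f hn (Nat.sub_le n 1)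

theorem sum_Icc_sub_two_add_add {M : Type*} [AddCommMonoid M] (f : ℕ → M) {n : ℕ}
    (hn : 2 ≤ n) :
    ∑ l ∈ Icc 1 (n - 2), f l + f (n - 1) + f n = ∑ l ∈ Icc 1 n, f l := by
  rw [← sum_Icc_pred_add f (show 1 ≤ n by omega), ← sum_Icc_pred_add f (show 1 ≤ n - 1 by omega),
    Nat.sub_sub]

theorem sum_Icc_right_mono {M : Type*} [AddCommMonoid M] [PartialOrder M]
    [IsOrderedAddMonoid M] [CanonicallyOrderedAdd M] (f : ℕ → M) {p q r : ℕ} (hqr : q ≤ r) :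
    ∑ l ∈ Icc p q, f l ≤ ∑ l ∈ Icc p r, f l :=
  sum_le_sum_of_subset (Icc_subset_Icc_right hqr)

section UnitVec

theorem unitVec_of_ne {i l : ℕ} (h : l ≠ i) : unitVec i l = 0 :=
  if_neg h

theorem sum_unitVec (s : Finset ℕ) (i : ℕ) :
    ∑ l ∈ s, unitVec i l = if i ∈ s then 1 else 0 := by
  simp [unitVec]

theorem sum_unitVec_of_mem {s : Finset ℕ} {i : ℕ} (hi : i ∈ s) : ∑ l ∈ s, unitVec i l = 1 := by
  rw [sum_unitVec, if_pos hi]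

theorem sum_unitVec_le_one (s : Finset ℕ) (i : ℕ) : ∑ l ∈ s, unitVec i l ≤ 1 := by
  rw [sum_unitVec]
  split_ifs <;> decide

theorem sum_Icc_unitVec_eq_zero {j p q : ℕ} (hj : j < p ∨ q < j) :
    ∑ l ∈ Icc p q, unitVec j l = 0 := by
  rw [sum_unitVec, if_neg (by rw [mem_Icc]; omega)]

theorem sum_Icc_unitVec_le_sum {m : ℕ → ℕ} {p j : ℕ} (hj : 1 ≤ ∑ l ∈ Icc p j, m l) (q : ℕ) :
    ∑ l ∈ Icc p q, unitVec j l ≤ ∑ l ∈ Icc p q, m l := by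
  rcases lt_or_ge q j with hqj | hjq
  · rw [sum_Icc_unitVec_eq_zero (.inr hqj)]
    exact Nat.zero_le _
  · exact (sum_unitVec_le_one _ _).trans (hj.trans (sum_Icc_right_mono m hjq))

end UnitVec

section QD

variable {n : ℕ} (m : ℕ → ℕ)

theorem QD_eq_sum_add_sum {d : ℕ} (hd : 1 ≤ d) (hdn : d ≤ n - 1) :
    QD n m d = ∑ l ∈ Icc 1 n, m l + ∑ l ∈ Icc d (n - 2), m l := by
  rw [QD, ← sum_Icc_sub_two_add_add m (show 2 ≤ n by omega),
    ← sum_Icc_pred_add_sum_Icc m hd (show d - 1 ≤ n - 2 by omega)]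
  ring

theorem QD_pred (hn : 2 ≤ n) : QD n m (n - 1) = ∑ l ∈ Icc 1 n, m l := by
  rw [QD_eq_sum_add_sum m (by omega) le_rfl,
    Icc_eq_empty (show ¬n - 1 ≤ n - 2 by omega), sum_empty, add_zero]

theorem sum_le_QD {d : ℕ} (hd : 1 ≤ d) (hdn : d ≤ n - 1) : ∑ l ∈ Icc 1 n, m l ≤ QD n m d := by
  rw [QD_eq_sum_add_sum m hd hdn]
  exact Nat.le_add_right _ _

theorem QD_anti {d e : ℕ} (hd : 1 ≤ d) (hde : d ≤ e) (hen : e ≤ n - 1) :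
    QD n m e ≤ QD n m d := by
  rw [QD_eq_sum_add_sum m (hd.trans hde) hen, QD_eq_sum_add_sum m hd (hde.trans hen)]
  gcongr

theorem QD_add_sum_pred {d : ℕ} (hd : 1 ≤ d) (hdn : d ≤ n - 1) :
    QD n m d + ∑ l ∈ Icc 1 (d - 1), m l =
      ∑ l ∈ Icc 1 n, m l + ∑ l ∈ Icc 1 (n - 2), m l := by
  rw [QD_eq_sum_add_sum m hd hdn,
    ← sum_Icc_pred_add_sum_Icc m hd (show d - 1 ≤ n - 2 by omega)]
  ring

theorem QD_unitVec {d i : ℕ} (hd : 1 ≤ d) (hdi : d ≤ i) (hin : i ≤ n - 2) :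
    QD n (unitVec i) d = 2 := by
  rw [QD_eq_sum_add_sum _ hd (by omega), sum_unitVec_of_mem (mem_Icc.2 (by omega)),
    sum_unitVec_of_mem (mem_Icc.2 ⟨hdi, hin⟩)]

end QD

section Faces

variable {n b : ℕ} {m a d : ℕ → ℕ}

theorem mem_SD_iff_of_b_eq_zero (hn : 3 ≤ n) :
    (a, 0, d) ∈ SD n m ↔
      (∀ l, (l = 0 ∨ n - 1 < l) → a l = 0) ∧
      (∀ l, (l ≤ 1 ∨ n - 1 < l) → d l = 0) ∧
      (∀ j, 1 ≤ j → j ≤ n - 1 → ∑ l ∈ Icc 1 j, a l ≤ ∑ l ∈ Icc 1 j, m l) ∧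
      ∀ e, 2 ≤ e → e ≤ n - 1 →
        ∑ l ∈ Icc 1 (n - 1), a l + ∑ l ∈ Icc e (n - 1), d l ≤ QD n m e := by
  have hQ : QD n m (n - 1) = ∑ l ∈ Icc 1 n, m l := QD_pred m (by omega)
  constructor
  · rintro ⟨ha, hd, hD1, -, hD3, -, hD5, -, -⟩
    refine ⟨ha, hd, hD1, fun e he hen => ?_⟩
    rcases hen.lt_or_eq with hlt | rfl
    · exact hD5 e he (by omega)
    · rw [hQ, Icc_self, sum_singleton]
      exact hD3
  · rintro ⟨ha, hd, hD1, hdeg⟩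
    have ha_mono : ∑ l ∈ Icc 1 (n - 2), a l ≤ ∑ l ∈ Icc 1 (n - 1), a l :=
      sum_Icc_right_mono a (by omega)
    have hD3 := hdeg (n - 1) (by omega) le_rfl
    rw [hQ, Icc_self, sum_singleton] at hD3
    refine ⟨ha, hd, hD1, ?_, hD3, ?_, fun e he hen => hdeg e he (by omega),
      fun e he hen => ?_, fun e k he hen hek hkn => ?_⟩
    · exact (hD1 (n - 2) (by omega) (by omega)).trans (Nat.le_add_right _ _)
    · dsimp only
      omega
    · have hD5 := hdeg e he (by omega)
      dsimp only
      omega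
    · have hsplit := sum_Icc_add_sum_Icc_succ a (show 1 ≤ k + 1 by omega)
        (show k ≤ n - 1 by omega)
      calc 2 * ∑ l ∈ Icc 1 k, a l + ∑ l ∈ Icc (k + 1) (n - 1), a l + 0
              + ∑ l ∈ Icc e (n - 1), d l
          = ∑ l ∈ Icc 1 (n - 1), a l + ∑ l ∈ Icc e (n - 1), d l + ∑ l ∈ Icc 1 k, a l := by omega
        _ ≤ QD n m e + ∑ l ∈ Icc 1 k, m l :=
          add_le_add (hdeg e he hen) (hD1 k (by omega) (by omega))

theorem mem_SD_iff_of_d_eq_zero (hn : 2 ≤ n) :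
    (a, b, 0) ∈ SD n m ↔
      (∀ l, (l = 0 ∨ n - 1 < l) → a l = 0) ∧
      (∀ j, 1 ≤ j → j ≤ n - 1 → ∑ l ∈ Icc 1 j, a l ≤ ∑ l ∈ Icc 1 j, m l) ∧
      ∑ l ∈ Icc 1 (n - 2), a l + b ≤ ∑ l ∈ Icc 1 (n - 2), m l + m n := by
  refine ⟨fun ⟨ha, _, hD1, hD2, _⟩ => ⟨ha, hD1, hD2⟩, fun ⟨ha, hD1, hD2⟩ => ?_⟩
  have hM := sum_Icc_sub_two_add_add m hn
  have hM' := sum_Icc_pred_add m (show 1 ≤ n by omega)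
  have hA := hD1 (n - 1) (by omega) le_rfl
  have hAM : ∑ l ∈ Icc 1 (n - 1), a l ≤ ∑ l ∈ Icc 1 n, m l := by omega
  have hbM : ∑ l ∈ Icc 1 (n - 2), a l + b ≤ ∑ l ∈ Icc 1 n, m l := by omega
  refine ⟨ha, fun _ _ => rfl, hD1, hD2, hAM, hbM, fun e he hen => ?_, fun e he hen => ?_,
    fun e k he hen hek hkn => ?_⟩ <;> simp only [Pi.zero_apply, sum_const_zero, add_zero]
  · exact hAM.trans (sum_le_QD m (by omega) (by omega))
  · exact hbM.trans (sum_le_QD m (by omega) (by omega))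
  · have hsplit := sum_Icc_add_sum_Icc_succ a (show 1 ≤ k + 1 by omega)
      (show k ≤ n - 1 by omega)
    calc 2 * ∑ l ∈ Icc 1 k, a l + ∑ l ∈ Icc (k + 1) (n - 1), a l + b
        = ∑ l ∈ Icc 1 (n - 1), a l + (∑ l ∈ Icc 1 k, a l + b) := by omega
      _ ≤ ∑ l ∈ Icc 1 (n - 1), a l + (∑ l ∈ Icc 1 (n - 2), a l + b) := by gcongr
      _ ≤ ∑ l ∈ Icc 1 (n - 1), m l + (∑ l ∈ Icc 1 (n - 2), m l + m n) := add_le_add hA hD2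
      _ = QD n m e + ∑ l ∈ Icc 1 (e - 1), m l := by
        rw [QD_add_sum_pred m (by omega) hen]
        omega
      _ ≤ QD n m e + ∑ l ∈ Icc 1 k, m l := by gcongr

end Faces

section UnitPoints

variable {n : ℕ} {m : ℕ → ℕ}

theorem unitVec_zero_zero_mem_SD {j : ℕ} (hj : 1 ≤ j) (hjn : j ≤ n - 1)
    (hm : 1 ≤ ∑ l ∈ Icc 1 j, m l) : (unitVec j, 0, 0) ∈ SD n m :=
  (mem_SD_iff_of_d_eq_zero (by omega)).2 ⟨fun _ hl => unitVec_of_ne (by omega),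
    fun k _ _ => sum_Icc_unitVec_le_sum hm k,
    (sum_Icc_unitVec_le_sum hm (n - 2)).trans (Nat.le_add_right _ _)⟩

theorem zero_one_zero_mem_SD (hn : 2 ≤ n) (hm : 1 ≤ ∑ l ∈ Icc 1 (n - 2), m l + m n) :
    (0, 1, 0) ∈ SD n m :=
  (mem_SD_iff_of_d_eq_zero hn).2
    ⟨fun _ _ => rfl, fun _ _ _ => sum_const_zero.trans_le (Nat.zero_le _), by simpa using hm⟩

theorem unitVec_pred_one_zero_mem_SD (hn : 2 ≤ n) (ha : 1 ≤ ∑ l ∈ Icc 1 (n - 1), m l)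
    (hb : 1 ≤ ∑ l ∈ Icc 1 (n - 2), m l + m n) : (unitVec (n - 1), 1, 0) ∈ SD n m :=
  (mem_SD_iff_of_d_eq_zero hn).2 ⟨fun _ hl => unitVec_of_ne (by omega),
    fun k _ _ => sum_Icc_unitVec_le_sum ha k,
    by rwa [sum_Icc_unitVec_eq_zero (by omega), zero_add]⟩

theorem zero_zero_unitVec_mem_SD {j : ℕ} (hj : 2 ≤ j) (hjn : j ≤ n - 1)
    (hm : 1 ≤ ∑ l ∈ Icc 1 n, m l) : (0, 0, unitVec j) ∈ SD n m := by
  refine (mem_SD_iff_of_b_eq_zero (by omega)).2 ⟨fun _ _ => rfl,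
    fun _ hl => unitVec_of_ne (by omega),
    fun _ _ _ => sum_const_zero.trans_le (Nat.zero_le _), fun e he hen => ?_⟩
  simp only [Pi.zero_apply, sum_const_zero, zero_add]
  exact (sum_unitVec_le_one _ _).trans (hm.trans (sum_le_QD m (by omega) hen))

theorem unitVec_zero_unitVec_mem_SD {j j' : ℕ} (hj : 1 ≤ j) (hjn : j ≤ n - 1) (hj' : 2 ≤ j')
    (hjn' : j' ≤ n - 1) (hm : 1 ≤ ∑ l ∈ Icc 1 j, m l) (hQ : 2 ≤ QD n m j') :
    (unitVec j, 0, unitVec j') ∈ SD n m := by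
  refine (mem_SD_iff_of_b_eq_zero (by omega)).2 ⟨fun _ hl => unitVec_of_ne (by omega),
    fun _ hl => unitVec_of_ne (by omega), fun k _ _ => sum_Icc_unitVec_le_sum hm k,
    fun e he hen => ?_⟩
  have ha : ∑ l ∈ Icc 1 (n - 1), unitVec j l ≤ 1 := sum_unitVec_le_one _ _
  rcases le_or_gt e j' with hej | hje
  · have hd : ∑ l ∈ Icc e (n - 1), unitVec j' l ≤ 1 := sum_unitVec_le_one _ _
    exact (add_le_add ha hd).trans (hQ.trans (QD_anti m (by omega) hej hjn'))
  · rw [sum_Icc_unitVec_eq_zero (.inl hje), add_zero]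
    calc ∑ l ∈ Icc 1 (n - 1), unitVec j l
        ≤ ∑ l ∈ Icc 1 j, m l := ha.trans hm
      _ ≤ ∑ l ∈ Icc 1 n, m l := sum_Icc_right_mono m (by omega)
      _ ≤ QD n m e := sum_le_QD m (by omega) hen

theorem zero_zero_unitVec_add_unitVec_mem_SD {j j' : ℕ} (hj : 2 ≤ j) (hjn : j ≤ n - 1)
    (hj' : 2 ≤ j') (hjn' : j' ≤ n - 1) (hQ : 2 ≤ QD n m j) (hQ' : 2 ≤ QD n m j') :
    (0, 0, unitVec j + unitVec j') ∈ SD n m := by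
  refine (mem_SD_iff_of_b_eq_zero (by omega)).2 ⟨fun _ _ => rfl, fun l hl => ?_,
    fun _ _ _ => sum_const_zero.trans_le (Nat.zero_le _), fun e he _ => ?_⟩
  · rw [Pi.add_apply, unitVec_of_ne (by omega), unitVec_of_ne (by omega)]
  · simp only [Pi.zero_apply, Pi.add_apply, sum_const_zero, sum_add_distrib, zero_add]
    have two_le_QD (h : e ≤ j ∨ e ≤ j') : 2 ≤ QD n m e :=
      h.elim (fun h => hQ.trans (QD_anti m (by omega) h hjn))
        (fun h => hQ'.trans (QD_anti m (by omega) h hjn'))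
    by_cases h : e ≤ j ∨ e ≤ j'
    · exact (add_le_add (sum_unitVec_le_one _ _) (sum_unitVec_le_one _ _)).trans (two_le_QD h)
    · rw [sum_Icc_unitVec_eq_zero (by omega), sum_Icc_unitVec_eq_zero (by omega)]
      exact Nat.zero_le _

end UnitPoints

/-- Points of the fundamental set `S_D(e_i)` in type `D`, following the paper's Lemma:
the cases `i = 1`, `2 ≤ i ≤ n-2`, `i = n-1` and `i = n`.  Here `u(a_j) = (e_j, 0, 0)`,
`u(b) = (0, 1, 0)` and `u(d_j) = (0, 0, e_j)`. -/
theorem SD_fundamental_points (n i : ℕ) (hn : 4 ≤ n) (hi1 : 1 ≤ i) (hin : i ≤ n) :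
    (i = 1 →
      (∀ j, 1 ≤ j → j ≤ n - 1 →
        ((unitVec j, 0, 0) : (ℕ → ℕ) × ℕ × (ℕ → ℕ)) ∈ SD n (unitVec i)) ∧
      ((0, 1, 0) : (ℕ → ℕ) × ℕ × (ℕ → ℕ)) ∈ SD n (unitVec i) ∧
      (∀ j, 2 ≤ j → j ≤ n - 1 →
        ((0, 0, unitVec j) : (ℕ → ℕ) × ℕ × (ℕ → ℕ)) ∈ SD n (unitVec i)) ∧
      ((unitVec (n - 1), 1, 0) : (ℕ → ℕ) × ℕ × (ℕ → ℕ)) ∈ SD n (unitVec i)) ∧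
    (2 ≤ i → i ≤ n - 2 →
      (∀ j, i ≤ j → j ≤ n - 1 →
        ((unitVec j, 0, 0) : (ℕ → ℕ) × ℕ × (ℕ → ℕ)) ∈ SD n (unitVec i)) ∧
      ((0, 1, 0) : (ℕ → ℕ) × ℕ × (ℕ → ℕ)) ∈ SD n (unitVec i) ∧
      (∀ j, 2 ≤ j → j ≤ n - 1 →
        ((0, 0, unitVec j) : (ℕ → ℕ) × ℕ × (ℕ → ℕ)) ∈ SD n (unitVec i)) ∧
      ((unitVec (n - 1), 1, 0) : (ℕ → ℕ) × ℕ × (ℕ → ℕ)) ∈ SD n (unitVec i) ∧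
      (∀ j j', i ≤ j → j ≤ n - 1 → 2 ≤ j' → j' ≤ i →
        ((unitVec j, 0, unitVec j') : (ℕ → ℕ) × ℕ × (ℕ → ℕ)) ∈ SD n (unitVec i)) ∧
      (∀ j j', 2 ≤ j → j ≤ i → 2 ≤ j' → j' ≤ i → j ≠ j' →
        ((0, 0, unitVec j + unitVec j') : (ℕ → ℕ) × ℕ × (ℕ → ℕ)) ∈ SD n (unitVec i))) ∧
    (i = n - 1 →
      ((unitVec (n - 1), 0, 0) : (ℕ → ℕ) × ℕ × (ℕ → ℕ)) ∈ SD n (unitVec i) ∧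
      (∀ j, 2 ≤ j → j ≤ n - 1 →
        ((0, 0, unitVec j) : (ℕ → ℕ) × ℕ × (ℕ → ℕ)) ∈ SD n (unitVec i))) ∧
    (i = n →
      ((0, 1, 0) : (ℕ → ℕ) × ℕ × (ℕ → ℕ)) ∈ SD n (unitVec i) ∧
      (∀ j, 2 ≤ j → j ≤ n - 1 →
        ((0, 0, unitVec j) : (ℕ → ℕ) × ℕ × (ℕ → ℕ)) ∈ SD n (unitVec i))) := by
  have one_le_sum {j : ℕ} (hij : i ≤ j) : 1 ≤ ∑ l ∈ Icc 1 j, unitVec i l :=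
    (sum_unitVec_of_mem (mem_Icc.2 ⟨hi1, hij⟩)).ge
  have b_bound (h : i ≤ n - 2) : 1 ≤ ∑ l ∈ Icc 1 (n - 2), unitVec i l + unitVec i n :=
    le_add_right (one_le_sum h)
  have a_mem (j : ℕ) (hij : i ≤ j) (hjn : j ≤ n - 1) : (unitVec j, 0, 0) ∈ SD n (unitVec i) :=
    unitVec_zero_zero_mem_SD (hi1.trans hij) hjn (one_le_sum hij)
  have b_mem : 1 ≤ ∑ l ∈ Icc 1 (n - 2), unitVec i l + unitVec i n →
      (0, 1, 0) ∈ SD n (unitVec i) :=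
    zero_one_zero_mem_SD (by omega)
  have d_mem (j : ℕ) (hj : 2 ≤ j) (hjn : j ≤ n - 1) : (0, 0, unitVec j) ∈ SD n (unitVec i) :=
    zero_zero_unitVec_mem_SD hj hjn (one_le_sum hin)
  have ab_mem (h : i ≤ n - 2) : (unitVec (n - 1), 1, 0) ∈ SD n (unitVec i) :=
    unitVec_pred_one_zero_mem_SD (by omega) (one_le_sum (by omega)) (b_bound h)
  refine ⟨fun h => ⟨fun j hj => a_mem j (by omega), b_mem (b_bound (by omega)), d_mem,
      ab_mem (by omega)⟩,
    fun _ h => ⟨a_mem, b_mem (b_bound h), d_mem, ab_mem h, fun j j' hij hjn hj' hji => ?_,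
      fun j j' hj hji hj' hji' _ => ?_⟩,
    fun h => ⟨a_mem _ h.le le_rfl, d_mem⟩, fun h => ⟨b_mem (by simp [h, unitVec]), d_mem⟩⟩
  · exact unitVec_zero_unitVec_mem_SD (by omega) hjn hj' (by omega) (one_le_sum hij)
      (QD_unitVec (by omega) hji h).ge
  · exact zero_zero_unitVec_add_unitVec_mem_SD hj (by omega) hj' (by omega)
      (QD_unitVec (by omega) hji h).ge (QD_unitVec (by omega) hji' h).ge
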